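/- For every morphism term g of the free bicartesian closed category ℬ there exists a mixless proof π of the sequent system 𝒥 such that g = t(π) holds in ℬ. -/

import Mathlib

namespace JSys

/-! ### The sequent system `𝒥` for intuitionistic propositional logic -/

/-- formulae, generated from a countable set of propositional letters by `⊤`, `⊥`,
`∧`, `∨`, `→` -/
inductive Fml : Type
  | pl : ℕ → Fml
  | top : Fml
  | bot : Fml
  | and : Fml → Fml → Fml
  | or : Fml → Fml → Fml
  | imp : Fml → Fml → Fml
deriving DecidableEq

/-- `∧`-contexts -/
inductive Ctx : Type
  | box : Ctx
  | conL : Ctx → Fml → Ctx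
  | conR : Fml → Ctx → Ctx
  | conB : Ctx → Ctx → Ctx

/-- substitution of a formula for every occurrence of `□` in a `∧`-context -/
def Ctx.fill : Ctx → Fml → Fml
  | .box, A => A
  | .conL G B, A => (G.fill A).and B
  | .conR B G, A => B.and (G.fill A)
  | .conB G H, A => (G.fill A).and (H.fill A)

/-- the number of occurrences of `□` in a `∧`-context; a `∧₁`-context is a
`∧`-context `F` with `F.boxes = 1` -/
def Ctx.boxes : Ctx → ℕ
  | .box => 1
  | .conL G _ => G.boxes
  | .conR _ G => G.boxes
  | .conB G H => G.boxes + H.boxes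

/-- substitution of a `∧`-context for every occurrence of `□` in a `∧`-context -/
def Ctx.subst : Ctx → Ctx → Ctx
  | .box, K => K
  | .conL G A, K => .conL (G.subst K) A
  | .conR A G, K => .conR A (G.subst K)
  | .conB G H, K => .conB (G.subst K) (H.subst K)

theorem Ctx.subst_fill (G K : Ctx) (X : Fml) :
    (G.subst K).fill X = G.fill (K.fill X) := by
  induction G <;> simp [Ctx.subst, Ctx.fill, *]

/-- Proofs of the sequent system `𝒥`.  A proof of the sequent `A ⊢ B` is a term of
type `JPf A B`.  The axioms are `a_A : A ⊢ A` and `Π_A : ⊥ ⊢ A`; the structural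
rules (for `∧₁`-contexts `F`, witnessed by `F.boxes = 1`) are the two associativity
rules, commutativity `γ`, contraction `ω`, thinning `θ`, the unit rules `τ`, `τⁱ`,
and mix (for an arbitrary `∧`-context `G`); the rules for the connectives are `(∧)`,
`(◇)`, the two right `∨`-introductions, `(∗)` and `(▷)`. -/
inductive JPf : Fml → Fml → Type
  | ax (A : Fml) : JPf A A
  | exf (A : Fml) : JPf .bot A
  /-- `(β^→_F)`: from `F((A∧B)∧C) ⊢ D` infer `F(A∧(B∧C)) ⊢ D` -/
  | bA (F : Ctx) (hF : F.boxes = 1) {A B C D : Fml} :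
      JPf (F.fill ((A.and B).and C)) D → JPf (F.fill (A.and (B.and C))) D
  /-- `(β^←_F)`: from `F(A∧(B∧C)) ⊢ D` infer `F((A∧B)∧C) ⊢ D` -/
  | bB (F : Ctx) (hF : F.boxes = 1) {A B C D : Fml} :
      JPf (F.fill (A.and (B.and C))) D → JPf (F.fill ((A.and B).and C)) D
  /-- `(γ_F)` -/
  | perm (F : Ctx) (hF : F.boxes = 1) {A B C : Fml} :
      JPf (F.fill (A.and B)) C → JPf (F.fill (B.and A)) C
  /-- `(ω_F)` -/
  | contr (F : Ctx) (hF : F.boxes = 1) {A B : Fml} :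
      JPf (F.fill (A.and A)) B → JPf (F.fill A) B
  /-- `(θ^A_F)` -/
  | thin (F : Ctx) (hF : F.boxes = 1) (A : Fml) {B : Fml} :
      JPf (F.fill .top) B → JPf (F.fill A) B
  /-- `(τ_F)` -/
  | unitI (F : Ctx) (hF : F.boxes = 1) {A B : Fml} :
      JPf (F.fill A) B → JPf (F.fill (A.and .top)) B
  /-- `(τⁱ_F)` -/
  | unitE (F : Ctx) (hF : F.boxes = 1) {A B : Fml} :
      JPf (F.fill (A.and .top)) B → JPf (F.fill A) B
  /-- mix -/
  | mix (G : Ctx) {A B C : Fml} : JPf A B → JPf (G.fill B) C → JPf (G.fill A) C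
  /-- `(∧)` -/
  | andI {A B C D : Fml} : JPf A C → JPf B D → JPf (A.and B) (C.and D)
  /-- `(◇)` -/
  | orE {A B C D : Fml} : JPf (A.and C) D → JPf (B.and C) D → JPf ((A.or B).and C) D
  /-- `(∨ r₁)` -/
  | orI1 {A B : Fml} (C : Fml) : JPf A B → JPf A (B.or C)
  /-- `(∨ r₂)` -/
  | orI2 {A C : Fml} (B : Fml) : JPf A C → JPf A (B.or C)
  /-- `(∗)` -/
  | star {A B C : Fml} : JPf (A.and B) C → JPf B (A.imp C)
  /-- `(▷)` -/
  | tri {A B C D E : Fml} : JPf A B → JPf (C.and D) E → JPf ((A.and (B.imp C)).and D) E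

/-- a proof is mixless iff it contains no application of the rule mix -/
def MixFree : ∀ {A B : Fml}, JPf A B → Prop
  | _, _, .ax _ => True
  | _, _, .exf _ => True
  | _, _, .bA _ _ π => MixFree π
  | _, _, .bB _ _ π => MixFree π
  | _, _, .perm _ _ π => MixFree π
  | _, _, .contr _ _ π => MixFree π
  | _, _, .thin _ _ _ π => MixFree π
  | _, _, .unitI _ _ π => MixFree π
  | _, _, .unitE _ _ π => MixFree π
  | _, _, .mix _ _ _ => False
  | _, _, .andI π₁ π₂ => MixFree π₁ ∧ MixFree π₂
  | _, _, .orE π₁ π₂ => MixFree π₁ ∧ MixFree π₂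
  | _, _, .orI1 _ π => MixFree π
  | _, _, .orI2 _ π => MixFree π
  | _, _, .star π => MixFree π
  | _, _, .tri π₁ π₂ => MixFree π₁ ∧ MixFree π₂

/-! ### The free bicartesian closed category `ℬ` -/

/-- objects of the free bicartesian closed category, generated from the
propositional letters -/
inductive Obj : Type
  | pl : ℕ → Obj
  | unit : Obj
  | zero : Obj
  | prod : Obj → Obj → Obj
  | coprod : Obj → Obj → Obj
  | exp : Obj → Obj → Obj
deriving DecidableEq

/-- Morphism terms of the free bicartesian closed category, generated from the
special morphisms by the operations `×`, `+`, `⇒` and `∘` (the latter written in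
diagrammatic order as `comp`).  Here `d = d_A : A×I → A`, `dInv = dⁱ_A`,
`assocR = b^→`, `assocL = b^←`, `braid = c`, `diag = w`, `bang = k`, `codiag = m`,
`exf = λ`, `inl = λ¹`, `inr = λ²`, `ev = ε`, `coev = η`. -/
inductive Mor : Obj → Obj → Type
  | id (A : Obj) : Mor A A
  | comp {A B C : Obj} : Mor A B → Mor B C → Mor A C
  | d (A : Obj) : Mor (A.prod .unit) A
  | dInv (A : Obj) : Mor A (A.prod .unit)
  | assocR (A B C : Obj) : Mor (A.prod (B.prod C)) ((A.prod B).prod C)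
  | assocL (A B C : Obj) : Mor ((A.prod B).prod C) (A.prod (B.prod C))
  | braid (A B : Obj) : Mor (A.prod B) (B.prod A)
  | diag (A : Obj) : Mor A (A.prod A)
  | bang (A : Obj) : Mor A .unit
  | codiag (A : Obj) : Mor (A.coprod A) A
  | exf (A : Obj) : Mor .zero A
  | inl (A B : Obj) : Mor A (A.coprod B)
  | inr (A B : Obj) : Mor B (A.coprod B)
  | ev (A B : Obj) : Mor (A.prod (A.exp B)) B
  | coev (A B : Obj) : Mor B (A.exp (A.prod B))
  | pr {A B C D : Obj} : Mor A B → Mor C D → Mor (A.prod C) (B.prod D)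
  | co {A B C D : Obj} : Mor A B → Mor C D → Mor (A.coprod C) (B.coprod D)
  | ex {A B C D : Obj} : Mor A B → Mor C D → Mor (B.exp C) (A.exp D)

namespace Mor

/-- the middle part of the canonical transformation `c^m` -/
def cmMid (B C D : Obj) : Mor (B.prod (C.prod D)) (C.prod (B.prod D)) :=
  .comp (.assocR B C D) (.comp (.pr (.braid B C) (.id D)) (.assocL C B D))

/-- the canonical transformation
`c^m_{A,B,C,D} = b^→_{A,C,B×D} ∘ (1_A × (b^←_{C,B,D} ∘ (c_{B,C} × 1_D) ∘ b^→_{B,C,D})) ∘ b^←_{A,B,C×D}` -/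
def cm (A B C D : Obj) : Mor ((A.prod B).prod (C.prod D)) ((A.prod C).prod (B.prod D)) :=
  .comp (.assocL A B (C.prod D)) (.comp (.pr (.id A) (cmMid B C D)) (.assocR A C (B.prod D)))

end Mor

/-- The bicartesian closed equations between morphism terms: the congruence
generated by the equations of Section 1 of the paper. -/
inductive BEq : ∀ {A B : Obj}, Mor A B → Mor A B → Prop
  | refl {A B} (f : Mor A B) : BEq f f
  | symm {A B} {f g : Mor A B} : BEq f g → BEq g f
  | trans {A B} {f g h : Mor A B} : BEq f g → BEq g h → BEq f h
  | comp_congr {A B C} {f f' : Mor A B} {g g' : Mor B C} :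
      BEq f f' → BEq g g' → BEq (.comp f g) (.comp f' g')
  | pr_congr {A B C D} {f f' : Mor A B} {g g' : Mor C D} :
      BEq f f' → BEq g g' → BEq (.pr f g) (.pr f' g')
  | co_congr {A B C D} {f f' : Mor A B} {g g' : Mor C D} :
      BEq f f' → BEq g g' → BEq (.co f g) (.co f' g')
  | ex_congr {A B C D} {f f' : Mor A B} {g g' : Mor C D} :
      BEq f f' → BEq g g' → BEq (.ex f g) (.ex f' g')
  -- (cat 1), (cat 2)
  | id_left {A B} (f : Mor A B) : BEq (.comp (.id A) f) f
  | id_right {A B} (f : Mor A B) : BEq (.comp f (.id B)) f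
  | assoc {A B C D} (f : Mor A B) (g : Mor B C) (h : Mor C D) :
      BEq (.comp (.comp f g) h) (.comp f (.comp g h))
  -- (× 1), (× 2)
  | prod_id (A B : Obj) : BEq (.pr (.id A) (.id B)) (.id (A.prod B))
  | prod_comp {A B C A' B' C'} (f₁ : Mor A B) (f₂ : Mor B C) (g₁ : Mor A' B') (g₂ : Mor B' C') :
      BEq (.pr (.comp f₁ f₂) (.comp g₁ g₂)) (.comp (.pr f₁ g₁) (.pr f₂ g₂))
  -- (d)
  | d_nat {A B} (f : Mor A B) :
      BEq (.comp (.d A) f) (.comp (.pr f (.id .unit)) (.d B))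
  -- (d dⁱ)
  | d_dInv (A : Obj) : BEq (.comp (.dInv A) (.d A)) (.id A)
  | dInv_d (A : Obj) : BEq (.comp (.d A) (.dInv A)) (.id (A.prod .unit))
  -- (d c)
  | d_braid : BEq (.comp (.braid .unit .unit) (.d .unit)) (.d .unit)
  -- (b)
  | b_nat {A B C D E F'} (f : Mor A D) (g : Mor B E) (h : Mor C F') :
      BEq (.comp (.assocR A B C) (.pr (.pr f g) h))
          (.comp (.pr f (.pr g h)) (.assocR D E F'))
  -- (b b)
  | bR_bL (A B C : Obj) :
      BEq (.comp (.assocL A B C) (.assocR A B C)) (.id ((A.prod B).prod C))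
  | bL_bR (A B C : Obj) :
      BEq (.comp (.assocR A B C) (.assocL A B C)) (.id (A.prod (B.prod C)))
  -- (b 5)
  | b5 (A B C D : Obj) :
      BEq (.comp (.assocR A B (C.prod D)) (.assocR (A.prod B) C D))
          (.comp (.pr (.id A) (.assocR B C D))
            (.comp (.assocR A (B.prod C) D) (.pr (.assocR A B C) (.id D))))
  -- (c)
  | c_nat {A B C D} (f : Mor A C) (g : Mor B D) :
      BEq (.comp (.braid A B) (.pr g f)) (.comp (.pr f g) (.braid C D))
  -- (c c)
  | c_c (A B : Obj) : BEq (.comp (.braid A B) (.braid B A)) (.id (A.prod B))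
  -- (b c d)
  | bcd (A B : Obj) :
      BEq (.comp (.assocR A .unit B) (.pr (.d A) (.id B)))
          (.pr (.id A) (.comp (.braid .unit B) (.d B)))
  -- (b c 6)
  | bc6 (A B C : Obj) :
      BEq (.comp (.assocR A B C) (.comp (.braid (A.prod B) C) (.assocR C A B)))
          (.comp (.pr (.id A) (.braid B C))
            (.comp (.assocR A C B) (.pr (.braid A C) (.id B))))
  -- (w)
  | w_nat {A B} (f : Mor A B) :
      BEq (.comp (.diag A) (.pr f f)) (.comp f (.diag B))
  -- (d w)
  | d_w : BEq (.comp (.diag .unit) (.d .unit)) (.id .unit)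
  -- (b w)
  | b_w (A : Obj) :
      BEq (.comp (.diag A) (.comp (.pr (.id A) (.diag A)) (.assocR A A A)))
          (.comp (.diag A) (.pr (.diag A) (.id A)))
  -- (c w)
  | c_w (A : Obj) : BEq (.comp (.diag A) (.braid A A)) (.diag A)
  -- (b c w 8)
  | bcw8 (A B : Obj) :
      BEq (.comp (.diag (A.prod B)) (Mor.cm A B A B)) (.pr (.diag A) (.diag B))
  -- (k)
  | k_unique {A} (f : Mor A .unit) : BEq f (.bang A)
  -- (d k w)
  | dkw (A : Obj) :
      BEq (.comp (.diag A) (.comp (.pr (.id A) (.bang A)) (.d A))) (.id A)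
  -- (+ 1), (+ 2)
  | coprod_id (A B : Obj) : BEq (.co (.id A) (.id B)) (.id (A.coprod B))
  | coprod_comp {A B C A' B' C'} (f₁ : Mor A B) (f₂ : Mor B C) (g₁ : Mor A' B') (g₂ : Mor B' C') :
      BEq (.co (.comp f₁ f₂) (.comp g₁ g₂)) (.comp (.co f₁ g₁) (.co f₂ g₂))
  -- (λ¹), (λ²)
  | inl_nat {A₁ A₂ B₁ B₂} (f₁ : Mor A₁ B₁) (f₂ : Mor A₂ B₂) :
      BEq (.comp (.inl A₁ A₂) (.co f₁ f₂)) (.comp f₁ (.inl B₁ B₂))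
  | inr_nat {A₁ A₂ B₁ B₂} (f₁ : Mor A₁ B₁) (f₂ : Mor A₂ B₂) :
      BEq (.comp (.inr A₁ A₂) (.co f₁ f₂)) (.comp f₂ (.inr B₁ B₂))
  -- (λ)
  | exf_unique {A} (f : Mor .zero A) : BEq f (.exf A)
  -- (m)
  | m_nat {A B} (f : Mor A B) :
      BEq (.comp (.codiag A) f) (.comp (.co f f) (.codiag B))
  -- (λ m 1)
  | m_inl (A : Obj) : BEq (.comp (.inl A A) (.codiag A)) (.id A)
  | m_inr (A : Obj) : BEq (.comp (.inr A A) (.codiag A)) (.id A)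
  -- (λ m 2)
  | m_inl_inr (A B : Obj) :
      BEq (.comp (.co (.inl A B) (.inr A B)) (.codiag (A.coprod B))) (.id (A.coprod B))
  -- (⇒ 1), (⇒ 2)
  | exp_id (A B : Obj) : BEq (.ex (.id A) (.id B)) (.id (A.exp B))
  | exp_comp {A B' B C D' D} (g₁ : Mor B' B) (g₂ : Mor A B') (f₁ : Mor D' D) (f₂ : Mor C D') :
      BEq (.ex (.comp g₂ g₁) (.comp f₂ f₁)) (.comp (.ex g₁ f₂) (.ex g₂ f₁))
  -- (ε 1)
  | eps1 {A B C} (f : Mor A B) :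
      BEq (.comp (.ev C A) f) (.comp (.pr (.id C) (.ex (.id C) f)) (.ev C B))
  -- (η 1)
  | eta1 {A B C} (f : Mor A B) :
      BEq (.comp (.coev C A) (.ex (.id C) (.pr (.id C) f))) (.comp f (.coev C B))
  -- (ε 2)
  | eps2 {A B C} (f : Mor A B) :
      BEq (.comp (.pr f (.ex (.id B) (.id C))) (.ev B C))
          (.comp (.pr (.id A) (.ex f (.id C))) (.ev A C))
  -- (η 2)
  | eta2 {A B C} (f : Mor A B) :
      BEq (.comp (.coev B C) (.ex f (.pr (.id B) (.id C))))
          (.comp (.coev A C) (.ex (.id A) (.pr f (.id C))))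
  -- (1 ε η)
  | triangle1 (A B : Obj) :
      BEq (.comp (.coev A (A.exp B)) (.ex (.id A) (.ev A B))) (.id (A.exp B))
  -- (ε 1 η)
  | triangle2 (A B : Obj) :
      BEq (.comp (.pr (.id A) (.coev A B)) (.ev A (A.prod B))) (.id (A.prod B))

/-! ### The translations `t` and `t′` -/

/-- the translation of formulae into objects of `ℬ` -/
def tF : Fml → Obj
  | .pl i => .pl i
  | .top => .unit
  | .bot => .zero
  | .and A B => (tF A).prod (tF B)
  | .or A B => (tF A).coprod (tF B)
  | .imp A B => (tF A).exp (tF B)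

/-- the functor (acting on morphism terms) extracted from a `∧`-context -/
def mapCtx : (F : Ctx) → {X Y : Fml} → Mor (tF X) (tF Y) →
    Mor (tF (F.fill X)) (tF (F.fill Y))
  | .box, _, _, g => g
  | .conL G A, _, _, g => .pr (mapCtx G g) (.id (tF A))
  | .conR A G, _, _, g => .pr (.id (tF A)) (mapCtx G g)
  | .conB G H, _, _, g => .pr (mapCtx G g) (mapCtx H g)

/-- the canonical distributivity morphism
`ξ_{X,Y,Z} = ε ∘ (1_X × (m ∘ ((1_X ⇒ λ¹) ∘ η + (1_X ⇒ λ²) ∘ η))) : X×(Y+Z) → (X×Y)+(X×Z)` -/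
def xiM (X Y Z : Obj) : Mor (X.prod (Y.coprod Z)) ((X.prod Y).coprod (X.prod Z)) :=
  .comp
    (.pr (.id X)
      (.comp
        (.co (.comp (.coev X Y) (.ex (.id X) (.inl (X.prod Y) (X.prod Z))))
             (.comp (.coev X Z) (.ex (.id X) (.inr (X.prod Y) (X.prod Z)))))
        (.codiag (X.exp ((X.prod Y).coprod (X.prod Z))))))
    (.ev X ((X.prod Y).coprod (X.prod Z)))

/-- the translation `t` of `𝒥`-proofs into morphism terms of `ℬ` -/
def tP : ∀ {A B : Fml}, JPf A B → Mor (tF A) (tF B)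
  | _, _, .ax A => .id (tF A)
  | _, _, .exf A => .exf (tF A)
  | _, _, .bA F _ (A := A) (B := B) (C := C) π =>
      .comp (mapCtx F (X := A.and (B.and C)) (Y := (A.and B).and C)
        (.assocR (tF A) (tF B) (tF C))) (tP π)
  | _, _, .bB F _ (A := A) (B := B) (C := C) π =>
      .comp (mapCtx F (X := (A.and B).and C) (Y := A.and (B.and C))
        (.assocL (tF A) (tF B) (tF C))) (tP π)
  | _, _, .perm F _ (A := A) (B := B) π =>
      .comp (mapCtx F (X := B.and A) (Y := A.and B) (.braid (tF B) (tF A))) (tP π)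
  | _, _, .contr F _ (A := A) π =>
      .comp (mapCtx F (X := A) (Y := A.and A) (.diag (tF A))) (tP π)
  | _, _, .thin F _ A π => .comp (mapCtx F (X := A) (Y := Fml.top) (.bang (tF A))) (tP π)
  | _, _, .unitI F _ (A := A) π => .comp (mapCtx F (X := A.and Fml.top) (Y := A) (.d (tF A))) (tP π)
  | _, _, .unitE F _ (A := A) π => .comp (mapCtx F (X := A) (Y := A.and Fml.top) (.dInv (tF A))) (tP π)
  | _, _, .mix G π₁ π₂ => .comp (mapCtx G (tP π₁)) (tP π₂)
  | _, _, .andI π₁ π₂ => .pr (tP π₁) (tP π₂)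
  | _, _, .orE (A := A) (B := B) (C := C) (D := D) π₁ π₂ =>
      .comp (.braid ((tF A).coprod (tF B)) (tF C))
        (.comp (xiM (tF C) (tF A) (tF B))
          (.comp (.co (.braid (tF C) (tF A)) (.braid (tF C) (tF B)))
            (.comp (.co (tP π₁) (tP π₂)) (.codiag (tF D)))))
  | _, _, .orI1 C π => .comp (tP π) (.inl _ (tF C))
  | _, _, .orI2 B π => .comp (tP π) (.inr (tF B) _)
  | _, _, .star π => .comp (.coev _ _) (.ex (.id _) (tP π))
  | _, _, .tri (B := Bf) (C := Cf) π₁ π₂ =>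
      .comp (.pr (.comp (.pr (tP π₁) (.id ((tF Bf).exp (tF Cf)))) (.ev (tF Bf) (tF Cf))) (.id _))
        (tP π₂)

/-- the translation of objects of `ℬ` back into formulae (inverse to `tF`) -/
def uF : Obj → Fml
  | .pl i => .pl i
  | .unit => .top
  | .zero => .bot
  | .prod A B => (uF A).and (uF B)
  | .coprod A B => (uF A).or (uF B)
  | .exp A B => (uF A).imp (uF B)

theorem tF_uF (X : Obj) : tF (uF X) = X := by
  induction X <;> simp [tF, uF, *]

/-- the translation `t′` of morphism terms of `ℬ` into `𝒥`-proofs -/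
def uP : ∀ {X Y : Obj}, Mor X Y → JPf (uF X) (uF Y)
  | _, _, .id A => .ax (uF A)
  | _, _, .comp f g => .mix .box (uP f) (uP g)
  | _, _, .d A => .unitI .box rfl (.ax (uF A))
  | _, _, .dInv A => .unitE .box rfl (.ax ((uF A).and .top))
  | _, _, .assocR A B C => .bA .box rfl (.ax (((uF A).and (uF B)).and (uF C)))
  | _, _, .assocL A B C => .bB .box rfl (.ax ((uF A).and ((uF B).and (uF C))))
  | _, _, .braid A B => .perm .box rfl (.ax ((uF B).and (uF A)))
  | _, _, .diag A => .contr .box rfl (.ax ((uF A).and (uF A)))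
  | _, _, .bang A => .thin .box rfl (uF A) (.ax .top)
  | _, _, .codiag A => .unitE .box rfl
      (.orE (.unitI .box rfl (.ax (uF A))) (.unitI .box rfl (.ax (uF A))))
  | _, _, .exf A => .exf (uF A)
  | _, _, .inl A B => .orI1 (uF B) (.ax (uF A))
  | _, _, .inr A B => .orI2 (uF A) (.ax (uF B))
  | _, _, .ev A B => .unitE .box rfl (.tri (.ax (uF A)) (.unitI .box rfl (.ax (uF B))))
  | _, _, .coev A B => .star (.ax ((uF A).and (uF B)))
  | _, _, .pr f g => .andI (uP f) (uP g)
  | _, _, .co (A := A) (B := Bo) (C := C) (D := D) f g => .unitE .box rfl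
      (.orE (.unitI .box rfl (.orI1 (uF D) (uP f)))
            (.unitI .box rfl (.orI2 (uF Bo) (uP g))))
  | _, _, .ex f g => .star (.unitE .box rfl (.tri (uP f) (.unitI .box rfl (uP g))))

/-! ### The quotient category -/

open CategoryTheory

/-- `BEq` as a setoid -/
def morSetoid (A B : Obj) : Setoid (Mor A B) where
  r := BEq
  iseqv := ⟨BEq.refl, BEq.symm, BEq.trans⟩

/-- morphisms of `ℬ` -/
def QHom (A B : Obj) : Type := Quotient (morSetoid A B)

/-- class of a term -/
def cls {A B : Obj} (f : Mor A B) : QHom A B := Quotient.mk (morSetoid A B) f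

theorem cls_eq {A B : Obj} {f g : Mor A B} (h : BEq f g) : cls f = cls g :=
  Quotient.sound (s := morSetoid A B) h

theorem BEq_of_cls {A B : Obj} {f g : Mor A B} (h : cls f = cls g) : BEq f g :=
  Quotient.exact (s := morSetoid A B) h

theorem QHom.ind {A B : Obj} {p : QHom A B → Prop} (h : ∀ f, p (cls f)) (q) : p q :=
  Quotient.ind h q

instance catObj : Category Obj where
  Hom := QHom
  id A := cls (.id A)
  comp {A B C} f g := Quotient.map₂ (sa := morSetoid A B) (sb := morSetoid B C)
    (sc := morSetoid A C) Mor.comp (fun _ _ h _ _ h' => .comp_congr h h') f g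
  id_comp f := by induction f using QHom.ind; exact cls_eq (.id_left _)
  comp_id f := by induction f using QHom.ind; exact cls_eq (.id_right _)
  assoc f g h := by
    induction f using QHom.ind; induction g using QHom.ind; induction h using QHom.ind
    exact cls_eq (.assoc _ _ _)

/-- class of a term as a morphism of the quotient category -/
def cl {A B : Obj} (f : Mor A B) : A ⟶ B := cls f

theorem cl_eq {A B : Obj} {f g : Mor A B} (h : BEq f g) : cl f = cl g := cls_eq h

theorem cl_ind {A B : Obj} {p : (A ⟶ B) → Prop} (h : ∀ f, p (cl f)) (q) : p q :=
  Quotient.ind h q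

def qpr {A B C D : Obj} (f : A ⟶ B) (g : C ⟶ D) : A.prod C ⟶ B.prod D :=
  Quotient.map₂ (sa := morSetoid A B) (sb := morSetoid C D)
    (sc := morSetoid (A.prod C) (B.prod D)) Mor.pr (fun _ _ h _ _ h' => .pr_congr h h') f g

def qco {A B C D : Obj} (f : A ⟶ B) (g : C ⟶ D) : A.coprod C ⟶ B.coprod D :=
  Quotient.map₂ (sa := morSetoid A B) (sb := morSetoid C D)
    (sc := morSetoid (A.coprod C) (B.coprod D)) Mor.co (fun _ _ h _ _ h' => .co_congr h h') f g

def qex {A B C D : Obj} (f : A ⟶ B) (g : C ⟶ D) : B.exp C ⟶ A.exp D :=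
  Quotient.map₂ (sa := morSetoid A B) (sb := morSetoid C D)
    (sc := morSetoid (B.exp C) (A.exp D)) Mor.ex (fun _ _ h _ _ h' => .ex_congr h h') f g

theorem cl_id (A : Obj) : cl (.id A) = 𝟙 A := rfl
theorem cl_comp {A B C : Obj} (f : Mor A B) (g : Mor B C) : cl (.comp f g) = cl f ≫ cl g := rfl
theorem cl_pr {A B C D : Obj} (f : Mor A B) (g : Mor C D) : cl (.pr f g) = qpr (cl f) (cl g) := rfl
theorem cl_co {A B C D : Obj} (f : Mor A B) (g : Mor C D) : cl (.co f g) = qco (cl f) (cl g) := rfl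
theorem cl_ex {A B C D : Obj} (f : Mor A B) (g : Mor C D) : cl (.ex f g) = qex (cl f) (cl g) := rfl

/-! special morphisms -/

def qd (A : Obj) : A.prod .unit ⟶ A := cl (.d A)
def qdi (A : Obj) : A ⟶ A.prod .unit := cl (.dInv A)
def qbr (A B C : Obj) : A.prod (B.prod C) ⟶ (A.prod B).prod C := cl (.assocR A B C)
def qbl (A B C : Obj) : (A.prod B).prod C ⟶ A.prod (B.prod C) := cl (.assocL A B C)
def qc (A B : Obj) : A.prod B ⟶ B.prod A := cl (.braid A B)
def qw (A : Obj) : A ⟶ A.prod A := cl (.diag A)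
def qk (A : Obj) : A ⟶ .unit := cl (.bang A)
def qm (A : Obj) : A.coprod A ⟶ A := cl (.codiag A)
def qinl (A B : Obj) : A ⟶ A.coprod B := cl (.inl A B)
def qinr (A B : Obj) : B ⟶ A.coprod B := cl (.inr A B)
def qev (A B : Obj) : A.prod (A.exp B) ⟶ B := cl (.ev A B)
def qcoev (A B : Obj) : B ⟶ A.exp (A.prod B) := cl (.coev A B)
def qfst (A B : Obj) : A.prod B ⟶ A := qpr (𝟙 A) (qk B) ≫ qd A
def qsnd (A B : Obj) : A.prod B ⟶ B := qc A B ≫ qfst B A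

theorem qpr_id (A B : Obj) : qpr (𝟙 A) (𝟙 B) = 𝟙 (A.prod B) := cl_eq (.prod_id A B)

theorem qpr_comp {A B C A' B' C' : Obj} (f₁ : A ⟶ B) (f₂ : B ⟶ C) (g₁ : A' ⟶ B') (g₂ : B' ⟶ C') :
    qpr f₁ g₁ ≫ qpr f₂ g₂ = qpr (f₁ ≫ f₂) (g₁ ≫ g₂) := by
  induction f₁ using cl_ind; induction f₂ using cl_ind
  induction g₁ using cl_ind; induction g₂ using cl_ind
  exact (cl_eq (.prod_comp _ _ _ _)).symm

theorem qpr_comp_assoc {A B C A' B' C' Z : Obj} (f₁ : A ⟶ B) (f₂ : B ⟶ C) (g₁ : A' ⟶ B')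
    (g₂ : B' ⟶ C') (h : C.prod C' ⟶ Z) :
    qpr f₁ g₁ ≫ qpr f₂ g₂ ≫ h = qpr (f₁ ≫ f₂) (g₁ ≫ g₂) ≫ h := by
  rw [← Category.assoc, qpr_comp]

theorem qk_uniq {A : Obj} (f g : A ⟶ .unit) : f = g := by
  induction f using cl_ind; induction g using cl_ind
  exact cl_eq ((BEq.k_unique _).trans (BEq.k_unique _).symm)

theorem qd_nat {A B : Obj} (f : A ⟶ B) : qd A ≫ f = qpr f (𝟙 .unit) ≫ qd B := by
  induction f using cl_ind; exact cl_eq (.d_nat _)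

theorem qc_nat {A B C D : Obj} (f : A ⟶ C) (g : B ⟶ D) :
    qc A B ≫ qpr g f = qpr f g ≫ qc C D := by
  induction f using cl_ind; induction g using cl_ind; exact cl_eq (.c_nat _ _)

theorem qc_qc (A B : Obj) : qc A B ≫ qc B A = 𝟙 _ := cl_eq (.c_c A B)

theorem qbr_nat {A B C D E F' : Obj} (f : A ⟶ D) (g : B ⟶ E) (h : C ⟶ F') :
    qbr A B C ≫ qpr (qpr f g) h = qpr f (qpr g h) ≫ qbr D E F' := by
  induction f using cl_ind; induction g using cl_ind; induction h using cl_ind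
  exact cl_eq (.b_nat _ _ _)

theorem qbl_qbr (A B C : Obj) : qbl A B C ≫ qbr A B C = 𝟙 _ := cl_eq (.bR_bL A B C)
theorem qbr_qbl (A B C : Obj) : qbr A B C ≫ qbl A B C = 𝟙 _ := cl_eq (.bL_bR A B C)
theorem qdi_qd (A : Obj) : qdi A ≫ qd A = 𝟙 _ := cl_eq (.d_dInv A)
theorem qd_qdi (A : Obj) : qd A ≫ qdi A = 𝟙 _ := cl_eq (.dInv_d A)

theorem qbl_nat {A B C D E F' : Obj} (f : A ⟶ D) (g : B ⟶ E) (h : C ⟶ F') :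
    qbl A B C ≫ qpr f (qpr g h) = qpr (qpr f g) h ≫ qbl D E F' := by
  have := congrArg (fun x => qbl A B C ≫ x ≫ qbl D E F') (qbr_nat f g h)
  simp only [Category.assoc, qbr_qbl, Category.comp_id] at this
  rw [← this, ← Category.assoc, qbl_qbr, Category.id_comp]

theorem qw_nat {A B : Obj} (f : A ⟶ B) : qw A ≫ qpr f f = f ≫ qw B := by
  induction f using cl_ind; exact cl_eq (.w_nat _)

theorem qc_w (A : Obj) : qw A ≫ qc A A = qw A := cl_eq (.c_w A)

theorem qw_fst (A : Obj) : qw A ≫ qfst A A = 𝟙 A := cl_eq (.dkw A)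

theorem qw_snd (A : Obj) : qw A ≫ qsnd A A = 𝟙 A := by
  rw [qsnd, ← Category.assoc, qc_w, qw_fst]

theorem qpr_fst {A B C D : Obj} (f : A ⟶ B) (g : C ⟶ D) :
    qpr f g ≫ qfst B D = qfst A C ≫ f := by
  rw [qfst, qfst, Category.assoc, qd_nat, ← Category.assoc, qpr_comp, ← Category.assoc, qpr_comp,
    qk_uniq (g ≫ qk D) (qk C ≫ 𝟙 _), Category.comp_id, Category.id_comp]

theorem qc_fst (A B : Obj) : qc A B ≫ qfst B A = qsnd A B := rfl

theorem qc_snd (A B : Obj) : qc A B ≫ qsnd B A = qfst A B := by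
  rw [qsnd, ← Category.assoc, qc_qc, Category.id_comp]

theorem qpr_snd {A B C D : Obj} (f : A ⟶ B) (g : C ⟶ D) :
    qpr f g ≫ qsnd B D = qsnd A C ≫ g := by
  rw [qsnd, ← Category.assoc, ← qc_nat, Category.assoc, qpr_fst, ← Category.assoc]; rfl

theorem qc_unit : qc .unit .unit = 𝟙 _ := by
  have h : qc .unit .unit ≫ qd .unit = qd .unit := cl_eq .d_braid
  have := congrArg (fun x => x ≫ qdi .unit) h
  simpa only [Category.assoc, qd_qdi, Category.comp_id] using this

/-! `c^m` -/

def qcmMid (B C D : Obj) : B.prod (C.prod D) ⟶ C.prod (B.prod D) :=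
  qbr B C D ≫ qpr (qc B C) (𝟙 D) ≫ qbl C B D

def qcm (A B C D : Obj) : (A.prod B).prod (C.prod D) ⟶ (A.prod C).prod (B.prod D) :=
  qbl A B (C.prod D) ≫ qpr (𝟙 A) (qcmMid B C D) ≫ qbr A C (B.prod D)

theorem qcmMid_inv (B C D : Obj) : qcmMid B C D ≫ qcmMid C B D = 𝟙 _ := by
  simp only [qcmMid, Category.assoc]
  rw [← Category.assoc (qbl C B D), qbl_qbr, Category.id_comp, qpr_comp_assoc, qc_qc,
    Category.id_comp, qpr_id, Category.id_comp, qbr_qbl]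

theorem qcm_inv (A B C D : Obj) : qcm A B C D ≫ qcm A C B D = 𝟙 _ := by
  simp only [qcm, Category.assoc]
  rw [← Category.assoc (qbr A C _), qbr_qbl, Category.id_comp, qpr_comp_assoc, qcmMid_inv,
    Category.id_comp, qpr_id, Category.id_comp, qbl_qbr]

theorem qcmMid_nat {B C D B' C' D' : Obj} (g : B ⟶ B') (h : C ⟶ C') (k : D ⟶ D') :
    qcmMid B C D ≫ qpr h (qpr g k) = qpr g (qpr h k) ≫ qcmMid B' C' D' := by
  simp only [qcmMid, Category.assoc]
  rw [qbl_nat, qpr_comp_assoc, qc_nat, Category.id_comp, ← Category.assoc (qpr g _), ← qbr_nat,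
    Category.assoc, qpr_comp_assoc, Category.comp_id]

theorem qcm_nat {A B C D A' B' C' D' : Obj} (f : A ⟶ A') (g : B ⟶ B') (h : C ⟶ C') (k : D ⟶ D') :
    qcm A B C D ≫ qpr (qpr f h) (qpr g k) = qpr (qpr f g) (qpr h k) ≫ qcm A' B' C' D' := by
  simp only [qcm, Category.assoc]
  rw [qbr_nat, qpr_comp_assoc, qcmMid_nat, Category.id_comp, ← Category.assoc (qpr (qpr f g) _),
    ← qbl_nat, Category.assoc, qpr_comp_assoc, Category.comp_id]

theorem qcm_unit (A B : Obj) : qcm A .unit .unit B = 𝟙 _ := by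
  simp only [qcm, qcmMid, qc_unit, qpr_id, Category.id_comp, qbr_qbl, qbl_qbr]

theorem qw_prod (A B : Obj) : qw (A.prod B) = qpr (qw A) (qw B) ≫ qcm A A B B := by
  have h : qw (A.prod B) ≫ qcm A B A B = qpr (qw A) (qw B) := cl_eq (.bcw8 A B)
  rw [← h, Category.assoc, qcm_inv, Category.comp_id]

theorem qw_eta (A B : Obj) : qw (A.prod B) ≫ qpr (qfst A B) (qsnd A B) = 𝟙 _ := by
  have e : qpr (qfst A B) (qsnd A B) = qpr (qpr (𝟙 A) (qk B)) (qpr (qk A) (𝟙 B)) ≫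
      qpr (qd A) (qc .unit B ≫ qd B) := by
    rw [qpr_comp]
    congr 1
    rw [← Category.assoc, ← qc_nat, Category.assoc]; rfl
  rw [e, qw_prod, Category.assoc, ← Category.assoc (qcm A A B B), qcm_nat, qcm_unit,
    Category.comp_id, qpr_comp_assoc, qpr_comp, ← qpr_id]
  congr 1
  · rw [Category.assoc]; exact qw_fst A
  · rw [Category.assoc, ← Category.assoc (qpr (qk B) _), ← qc_nat, Category.assoc]; exact qw_snd B

theorem qext {Z A B : Obj} {f g : Z ⟶ A.prod B} (h₁ : f ≫ qfst A B = g ≫ qfst A B)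
    (h₂ : f ≫ qsnd A B = g ≫ qsnd A B) : f = g := by
  have key : ∀ f : Z ⟶ A.prod B, f = qw Z ≫ qpr (f ≫ qfst A B) (f ≫ qsnd A B) := by
    intro f
    rw [← qpr_comp, ← Category.assoc, qw_nat, Category.assoc, qw_eta, Category.comp_id]
  rw [key f, key g, h₁, h₂]

theorem qpr_fst_assoc {A B C D Z : Obj} (f : A ⟶ B) (g : C ⟶ D) (h : B ⟶ Z) :
    qpr f g ≫ qfst B D ≫ h = qfst A C ≫ f ≫ h := by
  rw [← Category.assoc, qpr_fst, Category.assoc]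
theorem qpr_snd_assoc {A B C D Z : Obj} (f : A ⟶ B) (g : C ⟶ D) (h : D ⟶ Z) :
    qpr f g ≫ qsnd B D ≫ h = qsnd A C ≫ g ≫ h := by
  rw [← Category.assoc, qpr_snd, Category.assoc]
theorem qc_fst_assoc {A B Z : Obj} (h : B ⟶ Z) :
    qc A B ≫ qfst B A ≫ h = qsnd A B ≫ h := by
  rw [← Category.assoc, qc_fst]
theorem qc_snd_assoc {A B Z : Obj} (h : A ⟶ Z) :
    qc A B ≫ qsnd B A ≫ h = qfst A B ≫ h := by
  rw [← Category.assoc, qc_snd]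

theorem qd_fst (A : Obj) : qd A = qfst A .unit := by
  rw [qfst, qk_uniq (qk .unit) (𝟙 _), qpr_id, Category.id_comp]

theorem qbr_snd (A B C : Obj) : qbr A B C ≫ qsnd (A.prod B) C = qsnd A (B.prod C) ≫ qsnd B C := by
  have bcd : qbr .unit .unit C ≫ qpr (qd .unit) (𝟙 C) = qpr (𝟙 .unit) (qc .unit C ≫ qd C) :=
    cl_eq (.bcd .unit C)
  have e1 : qsnd (A.prod B) C = qpr (qpr (qk A) (qk B)) (𝟙 C) ≫ qpr (qd .unit) (𝟙 C) ≫
      qsnd .unit C := by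
    simp only [qpr_snd, Category.comp_id]
  rw [e1, ← Category.assoc, qbr_nat, Category.assoc, ← Category.assoc (qbr _ _ _), bcd, qpr_snd,
    qpr_snd_assoc, qd_fst, qc_fst, qpr_snd, Category.comp_id]

theorem qbr_snd_assoc {A B C Z : Obj} (h : C ⟶ Z) :
    qbr A B C ≫ qsnd (A.prod B) C ≫ h = qsnd A (B.prod C) ≫ qsnd B C ≫ h := by
  rw [← Category.assoc, qbr_snd, Category.assoc]

theorem qbr_fst_snd (A B C : Obj) :
    qbr A B C ≫ qfst (A.prod B) C ≫ qsnd A B = qsnd A (B.prod C) ≫ qfst B C := by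
  have h : qbr A B C ≫ qc (A.prod B) C ≫ qbr C A B =
    qpr (𝟙 A) (qc B C) ≫ qbr A C B ≫ qpr (qc A C) (𝟙 B) := cl_eq (.bc6 A B C)
  have := congrArg (fun x => x ≫ qsnd _ _) h
  simpa only [Category.assoc, qbr_snd, qpr_snd, Category.comp_id, qpr_snd_assoc, qc_snd_assoc,
    qc_snd] using this

theorem qbr_fst_fst (A B C : Obj) :
    qbr A B C ≫ qfst (A.prod B) C ≫ qfst A B = qfst A (B.prod C) := by
  have bcd : qbr A .unit C ≫ qpr (qd A) (𝟙 C) = qpr (𝟙 A) (qc .unit C ≫ qd C) :=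
    cl_eq (.bcd A C)
  have h := congrArg (fun x => x ≫ qfst _ _) bcd
  simp only [Category.assoc, qpr_fst, Category.comp_id, qd_fst] at h
  have e : qfst (A.prod B) C ≫ qfst A B =
      qpr (qpr (𝟙 A) (qk B)) (𝟙 C) ≫ qfst (A.prod .unit) C ≫ qfst A .unit := by
    simp only [qpr_fst_assoc, qpr_fst, Category.comp_id]
  rw [e, ← Category.assoc, qbr_nat, Category.assoc, h, qpr_fst, Category.comp_id]

theorem qbr_fst_snd_assoc {A B C Z : Obj} (h : B ⟶ Z) :
    qbr A B C ≫ qfst (A.prod B) C ≫ qsnd A B ≫ h = qsnd A (B.prod C) ≫ qfst B C ≫ h := by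
  simpa only [Category.assoc] using congrArg (fun x => x ≫ h) (qbr_fst_snd A B C)

theorem qbr_fst_fst_assoc {A B C Z : Obj} (h : A ⟶ Z) :
    qbr A B C ≫ qfst (A.prod B) C ≫ qfst A B ≫ h = qfst A (B.prod C) ≫ h := by
  simpa only [Category.assoc] using congrArg (fun x => x ≫ h) (qbr_fst_fst A B C)

theorem qbl_eq {A B C Z : Obj} {f : A.prod (B.prod C) ⟶ Z} {g : (A.prod B).prod C ⟶ Z}
    (h : qbr A B C ≫ g = f) : qbl A B C ≫ f = g := by
  rw [← h, ← Category.assoc, qbl_qbr, Category.id_comp]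

theorem qbl_fst (A B C : Obj) :
    qbl A B C ≫ qfst A (B.prod C) = qfst (A.prod B) C ≫ qfst A B := qbl_eq (qbr_fst_fst A B C)
theorem qbl_snd_fst (A B C : Obj) :
    qbl A B C ≫ qsnd A (B.prod C) ≫ qfst B C = qfst (A.prod B) C ≫ qsnd A B :=
  qbl_eq (qbr_fst_snd A B C)
theorem qbl_snd_snd (A B C : Obj) :
    qbl A B C ≫ qsnd A (B.prod C) ≫ qsnd B C = qsnd (A.prod B) C := qbl_eq (qbr_snd A B C)
theorem qbl_fst_assoc {A B C Z : Obj} (h : A ⟶ Z) :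
    qbl A B C ≫ qfst A (B.prod C) ≫ h = qfst (A.prod B) C ≫ qfst A B ≫ h :=
  qbl_eq (qbr_fst_fst_assoc h)
theorem qbl_snd_fst_assoc {A B C Z : Obj} (h : B ⟶ Z) :
    qbl A B C ≫ qsnd A (B.prod C) ≫ qfst B C ≫ h = qfst (A.prod B) C ≫ qsnd A B ≫ h :=
  qbl_eq (qbr_fst_snd_assoc h)
theorem qbl_snd_snd_assoc {A B C Z : Obj} (h : C ⟶ Z) :
    qbl A B C ≫ qsnd A (B.prod C) ≫ qsnd B C ≫ h = qsnd (A.prod B) C ≫ h :=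
  qbl_eq (qbr_snd_assoc h)

theorem qw_fst_assoc {A Z : Obj} (h : A ⟶ Z) : qw A ≫ qfst A A ≫ h = h := by
  rw [← Category.assoc, qw_fst, Category.id_comp]
theorem qw_snd_assoc {A Z : Obj} (h : A ⟶ Z) : qw A ≫ qsnd A A ≫ h = h := by
  rw [← Category.assoc, qw_snd, Category.id_comp]
theorem qdi_fst (A : Obj) : qdi A ≫ qfst A .unit = 𝟙 A := by rw [← qd_fst, qdi_qd]
theorem qdi_fst_assoc {A Z : Obj} (h : A ⟶ Z) : qdi A ≫ qfst A .unit ≫ h = h := by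
  rw [← Category.assoc, qdi_fst, Category.id_comp]

/-! coproducts and exponentials -/

theorem qinl_co {A₁ A₂ B₁ B₂ : Obj} (f₁ : A₁ ⟶ B₁) (f₂ : A₂ ⟶ B₂) :
    qinl A₁ A₂ ≫ qco f₁ f₂ = f₁ ≫ qinl B₁ B₂ := by
  induction f₁ using cl_ind; induction f₂ using cl_ind; exact cl_eq (.inl_nat _ _)
theorem qinr_co {A₁ A₂ B₁ B₂ : Obj} (f₁ : A₁ ⟶ B₁) (f₂ : A₂ ⟶ B₂) :
    qinr A₁ A₂ ≫ qco f₁ f₂ = f₂ ≫ qinr B₁ B₂ := by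
  induction f₁ using cl_ind; induction f₂ using cl_ind; exact cl_eq (.inr_nat _ _)
theorem qinl_co_assoc {A₁ A₂ B₁ B₂ Z : Obj} (f₁ : A₁ ⟶ B₁) (f₂ : A₂ ⟶ B₂)
    (h : B₁.coprod B₂ ⟶ Z) : qinl A₁ A₂ ≫ qco f₁ f₂ ≫ h = f₁ ≫ qinl B₁ B₂ ≫ h := by
  rw [← Category.assoc, qinl_co, Category.assoc]
theorem qinr_co_assoc {A₁ A₂ B₁ B₂ Z : Obj} (f₁ : A₁ ⟶ B₁) (f₂ : A₂ ⟶ B₂)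
    (h : B₁.coprod B₂ ⟶ Z) : qinr A₁ A₂ ≫ qco f₁ f₂ ≫ h = f₂ ≫ qinr B₁ B₂ ≫ h := by
  rw [← Category.assoc, qinr_co, Category.assoc]
theorem qinl_m (A : Obj) : qinl A A ≫ qm A = 𝟙 A := cl_eq (.m_inl A)
theorem qinr_m (A : Obj) : qinr A A ≫ qm A = 𝟙 A := cl_eq (.m_inr A)
theorem qco_comp {A B C A' B' C' : Obj} (f₁ : A ⟶ B) (f₂ : B ⟶ C) (g₁ : A' ⟶ B') (g₂ : B' ⟶ C') :
    qco f₁ g₁ ≫ qco f₂ g₂ = qco (f₁ ≫ f₂) (g₁ ≫ g₂) := by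
  induction f₁ using cl_ind; induction f₂ using cl_ind
  induction g₁ using cl_ind; induction g₂ using cl_ind
  exact (cl_eq (.coprod_comp _ _ _ _)).symm
theorem qm_nat {A B : Obj} (f : A ⟶ B) : qm A ≫ f = qco f f ≫ qm B := by
  induction f using cl_ind; exact cl_eq (.m_nat _)

theorem qcoext {A B Z : Obj} {f g : A.coprod B ⟶ Z} (h₁ : qinl A B ≫ f = qinl A B ≫ g)
    (h₂ : qinr A B ≫ f = qinr A B ≫ g) : f = g := by
  have e : qco (qinl A B) (qinr A B) ≫ qm _ = 𝟙 _ := cl_eq (.m_inl_inr A B)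
  have key : ∀ f : A.coprod B ⟶ Z, f = qco (qinl A B ≫ f) (qinr A B ≫ f) ≫ qm Z := by
    intro f
    rw [← qco_comp, Category.assoc, ← qm_nat, ← Category.assoc, e, Category.id_comp]
  rw [key f, key g, h₁, h₂]

theorem qexf_uniq {A : Obj} (f g : Obj.zero ⟶ A) : f = g := by
  induction f using cl_ind; induction g using cl_ind
  exact cl_eq ((BEq.exf_unique _).trans (BEq.exf_unique _).symm)

theorem qev_nat {A B C : Obj} (f : A ⟶ B) :
    qev C A ≫ f = qpr (𝟙 C) (qex (𝟙 C) f) ≫ qev C B := by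
  induction f using cl_ind; exact cl_eq (.eps1 _)
theorem qcoev_nat {A B C : Obj} (f : A ⟶ B) :
    qcoev C A ≫ qex (𝟙 C) (qpr (𝟙 C) f) = f ≫ qcoev C B := by
  induction f using cl_ind; exact cl_eq (.eta1 _)
theorem qex_comp {A B' B C D' D : Obj} (g₁ : B' ⟶ B) (g₂ : A ⟶ B') (f₁ : D' ⟶ D) (f₂ : C ⟶ D') :
    qex (g₂ ≫ g₁) (f₂ ≫ f₁) = qex g₁ f₂ ≫ qex g₂ f₁ := by
  induction f₁ using cl_ind; induction f₂ using cl_ind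
  induction g₁ using cl_ind; induction g₂ using cl_ind
  exact cl_eq (.exp_comp _ _ _ _)
theorem qev_dinat {A B C : Obj} (f : A ⟶ B) :
    qpr f (𝟙 (B.exp C)) ≫ qev B C = qpr (𝟙 A) (qex f (𝟙 C)) ≫ qev A C := by
  induction f using cl_ind with | _ f =>
  have h : qpr (cl f) (qex (𝟙 B) (𝟙 C)) ≫ qev B C = qpr (𝟙 A) (qex (cl f) (𝟙 C)) ≫ qev A C :=
    cl_eq (.eps2 f)
  have h2 : qex (𝟙 B) (𝟙 C) = 𝟙 _ := cl_eq (.exp_id B C)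
  rwa [h2] at h

/-- currying -/
def qcur {A B C : Obj} (f : A.prod B ⟶ C) : B ⟶ A.exp C := qcoev A B ≫ qex (𝟙 A) f

theorem qcur_ev {A B C : Obj} (f : A.prod B ⟶ C) : qpr (𝟙 A) (qcur f) ≫ qev A C = f := by
  have h : qpr (𝟙 A) (qcoev A B) ≫ qev A (A.prod B) = 𝟙 _ := cl_eq (.triangle2 A B)
  have e : qpr (𝟙 A) (qcur f) = qpr (𝟙 A) (qcoev A B) ≫ qpr (𝟙 A) (qex (𝟙 A) f) := by
    rw [qpr_comp, Category.comp_id]; rfl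
  rw [e, Category.assoc, ← qev_nat, ← Category.assoc, h, Category.id_comp]

theorem qcur_nat {A B B' C : Obj} (g : B' ⟶ B) (f : A.prod B ⟶ C) :
    g ≫ qcur f = qcur (qpr (𝟙 A) g ≫ f) := by
  have := qex_comp (𝟙 A) (𝟙 A) f (qpr (𝟙 A) g)
  rw [Category.comp_id] at this
  rw [qcur, qcur, this, ← Category.assoc, ← qcoev_nat, Category.assoc]

theorem qcur_eta {A B C : Obj} (g : B ⟶ A.exp C) : qcur (qpr (𝟙 A) g ≫ qev A C) = g := by
  have h : qcur (qev A C) = 𝟙 _ := cl_eq (.triangle1 A C)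
  rw [← qcur_nat, h, Category.comp_id]

theorem qcur_inj {A B C : Obj} {f g : A.prod B ⟶ C} (h : qcur f = qcur g) : f = g := by
  rw [← qcur_ev f, h, qcur_ev]

theorem qzero_uniq {A C : Obj} (f g : A.prod .zero ⟶ C) : f = g :=
  qcur_inj (qexf_uniq _ _)

theorem qdist_ext {A B C Z : Obj} {f g : (A.coprod B).prod C ⟶ Z}
    (h₁ : qpr (qinl A B) (𝟙 C) ≫ f = qpr (qinl A B) (𝟙 C) ≫ g)
    (h₂ : qpr (qinr A B) (𝟙 C) ≫ f = qpr (qinr A B) (𝟙 C) ≫ g) : f = g := by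
  have : qc _ _ ≫ f = qc _ _ ≫ g := by
    apply qcur_inj
    apply qcoext
    · rw [qcur_nat, qcur_nat, ← Category.assoc, ← Category.assoc, ← qc_nat, Category.assoc, h₁,
        Category.assoc]
    · rw [qcur_nat, qcur_nat, ← Category.assoc, ← Category.assoc, ← qc_nat, Category.assoc, h₂,
        Category.assoc]
  have h3 := congrArg (fun x => qc _ _ ≫ x) this
  simpa only [← Category.assoc, qc_qc, Category.id_comp] using h3

theorem xi_inl (X Y Z : Obj) :
    qpr (𝟙 X) (qinl Y Z) ≫ cl (xiM X Y Z) = qinl (X.prod Y) (X.prod Z) := by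
  have : cl (xiM X Y Z) = qpr (𝟙 X) (qco (qcur (qinl (X.prod Y) (X.prod Z)))
    (qcur (qinr (X.prod Y) (X.prod Z))) ≫ qm _) ≫ qev _ _ := rfl
  rw [this, qpr_comp_assoc, qinl_co_assoc, qinl_m, Category.comp_id, Category.comp_id, qcur_ev]

theorem xi_inr (X Y Z : Obj) :
    qpr (𝟙 X) (qinr Y Z) ≫ cl (xiM X Y Z) = qinr (X.prod Y) (X.prod Z) := by
  have : cl (xiM X Y Z) = qpr (𝟙 X) (qco (qcur (qinl (X.prod Y) (X.prod Z)))
    (qcur (qinr (X.prod Y) (X.prod Z))) ≫ qm _) ≫ qev _ _ := rfl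
  rw [this, qpr_comp_assoc, qinr_co_assoc, qinr_m, Category.comp_id, Category.comp_id, qcur_ev]

theorem orE_aux {A B C Z : Obj} (p₁ : A.prod C ⟶ Z) (p₂ : B.prod C ⟶ Z)
    (q : (A.coprod B).prod C ⟶ Z) (e₁ : p₁ = qpr (qinl A B) (𝟙 C) ≫ q)
    (e₂ : p₂ = qpr (qinr A B) (𝟙 C) ≫ q) :
    qc _ _ ≫ cl (xiM C A B) ≫ qco (qc _ _) (qc _ _) ≫ qco p₁ p₂ ≫ qm Z = q := by
  apply qdist_ext
  · rw [← e₁, ← Category.assoc, ← qc_nat, Category.assoc, ← Category.assoc (qpr _ _), xi_inl,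
      qinl_co_assoc, qinl_co_assoc, qinl_m, Category.comp_id, ← Category.assoc, qc_qc,
      Category.id_comp]
  · rw [← e₂, ← Category.assoc, ← qc_nat, Category.assoc, ← Category.assoc (qpr _ _), xi_inr,
      qinr_co_assoc, qinr_co_assoc, qinr_m, Category.comp_id, ← Category.assoc, qc_qc,
      Category.id_comp]

theorem qpair_eta {A B Z : Obj} (q : Z ⟶ A.prod B) :
    qw Z ≫ qpr (q ≫ qfst A B) (q ≫ qsnd A B) = q := by
  rw [← qpr_comp, ← Category.assoc, qw_nat, Category.assoc, qw_eta, Category.comp_id]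

theorem qd_id_nat {A B : Obj} (f : A ⟶ B) : qd A ≫ 𝟙 A ≫ f = qpr f (𝟙 .unit) ≫ qd B := by
  rw [Category.id_comp, qd_nat]

theorem qdi_d_nat {Y Z : Obj} (f : Y ⟶ Z) : qdi Y ≫ qpr f (𝟙 Obj.unit) ≫ qd Z = f := by
  rw [← qd_nat, ← Category.assoc, qdi_qd, Category.id_comp]

theorem qpr_split {A B C D Z : Obj} (f : A ⟶ B) (g : C ⟶ D) (h : B.prod D ⟶ Z) :
    qpr f g ≫ h = qpr (𝟙 A) g ≫ qpr f (𝟙 D) ≫ h := by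
  rw [qpr_comp_assoc, Category.id_comp, Category.comp_id]

theorem ev_aux {A B Z V : Obj} (q : Z ⟶ A.prod B) (h : A.prod B ⟶ V) :
    qw Z ≫ qpr (q ≫ qfst A B) (q ≫ qsnd A B) ≫ h = q ≫ h := by
  rw [← Category.assoc, qpair_eta]

theorem coev_aux {A B C D : Obj} (a : C ⟶ A) (q : D ⟶ B) :
    qpr a (q ≫ qcoev A B) ≫ qev A (A.prod B) = qpr a q := by
  have h : qpr (𝟙 A) (qcoev A B) ≫ qev A (A.prod B) = 𝟙 _ := cl_eq (.triangle2 A B)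
  have e : qpr a (q ≫ qcoev A B) = qpr a q ≫ qpr (𝟙 A) (qcoev A B) := by
    rw [qpr_comp, Category.comp_id]
  rw [e, Category.assoc, h, Category.comp_id]

theorem ex_aux {A B C D U V : Obj} (f : A ⟶ B) (g : C ⟶ D) (a : U ⟶ A) (q : V ⟶ B.exp C) :
    (qpr (a ≫ f) q ≫ qev B C) ≫ g = qpr a (q ≫ qex f g) ≫ qev A D := by
  have e := qex_comp f (𝟙 A) g (𝟙 C)
  rw [Category.id_comp, Category.id_comp] at e
  have e2 : qpr a (q ≫ qex f g) =
      qpr a q ≫ qpr (𝟙 A) (qex f (𝟙 C)) ≫ qpr (𝟙 A) (qex (𝟙 A) g) := by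
    rw [e, qpr_comp, qpr_comp, Category.comp_id, Category.comp_id]
  rw [e2]
  simp only [Category.assoc]
  rw [← qev_nat, ← Category.assoc (qpr (𝟙 A) _), ← qev_dinat, Category.assoc, qpr_comp_assoc,
    Category.comp_id]

/-! ### Representable morphisms, closed predicates, logical predicate -/

/-- morphisms represented by mixless proofs -/
def Nf (Γ A : Fml) (q : tF Γ ⟶ tF A) : Prop := ∃ π : JPf Γ A, MixFree π ∧ cl (tP π) = q

/-- elementary structural morphisms -/
inductive Str : ∀ {Γ Δ : Fml}, (tF Γ ⟶ tF Δ) → Prop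
  | bA (F : Ctx) (hF : F.boxes = 1) (A B C : Fml) :
      Str (cl (mapCtx F (X := A.and (B.and C)) (Y := (A.and B).and C)
        (.assocR (tF A) (tF B) (tF C))))
  | bB (F : Ctx) (hF : F.boxes = 1) (A B C : Fml) :
      Str (cl (mapCtx F (X := (A.and B).and C) (Y := A.and (B.and C))
        (.assocL (tF A) (tF B) (tF C))))
  | perm (F : Ctx) (hF : F.boxes = 1) (A B : Fml) :
      Str (cl (mapCtx F (X := B.and A) (Y := A.and B) (.braid (tF B) (tF A))))
  | contr (F : Ctx) (hF : F.boxes = 1) (A : Fml) :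
      Str (cl (mapCtx F (X := A) (Y := A.and A) (.diag (tF A))))
  | thin (F : Ctx) (hF : F.boxes = 1) (A : Fml) :
      Str (cl (mapCtx F (X := A) (Y := Fml.top) (.bang (tF A))))
  | unitI (F : Ctx) (hF : F.boxes = 1) (A : Fml) :
      Str (cl (mapCtx F (X := A.and Fml.top) (Y := A) (.d (tF A))))
  | unitE (F : Ctx) (hF : F.boxes = 1) (A : Fml) :
      Str (cl (mapCtx F (X := A) (Y := A.and Fml.top) (.dInv (tF A))))

theorem Str.right (E : Fml) {Γ Δ : Fml} {s : tF Γ ⟶ tF Δ} (h : Str s) :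
    Str (Γ := E.and Γ) (Δ := E.and Δ) (qpr (𝟙 (tF E)) s) := by
  cases h with
  | bA F hF A B C => exact Str.bA (.conR E F) hF A B C
  | bB F hF A B C => exact Str.bB (.conR E F) hF A B C
  | perm F hF A B => exact Str.perm (.conR E F) hF A B
  | contr F hF A => exact Str.contr (.conR E F) hF A
  | thin F hF A => exact Str.thin (.conR E F) hF A
  | unitI F hF A => exact Str.unitI (.conR E F) hF A
  | unitE F hF A => exact Str.unitE (.conR E F) hF A

/-- predicates closed under the left rules -/
structure Closed {X : Obj} (P : ∀ Γ : Fml, (tF Γ ⟶ X) → Prop) : Prop where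
  str : ∀ {Γ Δ : Fml} {s : tF Γ ⟶ tF Δ} {q : tF Δ ⟶ X}, Str s → P Δ q → P Γ (s ≫ q)
  exf : ∀ q : tF .bot ⟶ X, P .bot q
  orE : ∀ {A B C : Fml} (q : ((tF A).coprod (tF B)).prod (tF C) ⟶ X),
    P (A.and C) (qpr (qinl (tF A) (tF B)) (𝟙 (tF C)) ≫ q) →
    P (B.and C) (qpr (qinr (tF A) (tF B)) (𝟙 (tF C)) ≫ q) →
    P ((A.or B).and C) q
  tri : ∀ {A B C D : Fml} (a : tF A ⟶ tF B) (q : (tF C).prod (tF D) ⟶ X),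
    Nf A B a → P (C.and D) q →
    P ((A.and (B.imp C)).and D)
      (qpr (qpr a (𝟙 ((tF B).exp (tF C))) ≫ qev (tF B) (tF C)) (𝟙 (tF D)) ≫ q)

/-- the closed predicate generated by a predicate -/
inductive Gen {X : Obj} (P : ∀ Γ : Fml, (tF Γ ⟶ X) → Prop) : ∀ Γ : Fml, (tF Γ ⟶ X) → Prop
  | base {Γ : Fml} {q : tF Γ ⟶ X} : P Γ q → Gen P Γ q
  | str {Γ Δ : Fml} {s : tF Γ ⟶ tF Δ} {q : tF Δ ⟶ X} : Str s → Gen P Δ q → Gen P Γ (s ≫ q)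
  | exf (q : tF .bot ⟶ X) : Gen P .bot q
  | orE {A B C : Fml} (q : ((tF A).coprod (tF B)).prod (tF C) ⟶ X) :
    Gen P (A.and C) (qpr (qinl (tF A) (tF B)) (𝟙 (tF C)) ≫ q) →
    Gen P (B.and C) (qpr (qinr (tF A) (tF B)) (𝟙 (tF C)) ≫ q) →
    Gen P ((A.or B).and C) q
  | tri {A B C D : Fml} (a : tF A ⟶ tF B) (q : (tF C).prod (tF D) ⟶ X) :
    Nf A B a → Gen P (C.and D) q →
    Gen P ((A.and (B.imp C)).and D)
      (qpr (qpr a (𝟙 ((tF B).exp (tF C))) ≫ qev (tF B) (tF C)) (𝟙 (tF D)) ≫ q)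

theorem Gen.closed {X : Obj} (P : ∀ Γ : Fml, (tF Γ ⟶ X) → Prop) : Closed (Gen P) :=
  ⟨.str, .exf, .orE, .tri⟩

theorem Gen.elim {X : Obj} {P Q : ∀ Γ : Fml, (tF Γ ⟶ X) → Prop} (hQ : Closed Q)
    (h : ∀ Γ q, P Γ q → Q Γ q) {Γ : Fml} {q : tF Γ ⟶ X} (g : Gen P Γ q) : Q Γ q := by
  induction g with
  | base hb => exact h _ _ hb
  | str hs _ ih => exact hQ.str hs ih
  | exf q => exact hQ.exf q
  | orE q _ _ ih₁ ih₂ => exact hQ.orE q ih₁ ih₂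
  | tri a q ha _ ih => exact hQ.tri a q ha ih

theorem pcast {X : Obj} {P : ∀ Γ : Fml, (tF Γ ⟶ X) → Prop} {Γ : Fml} {q q' : tF Γ ⟶ X}
    (h : P Γ q) (e : q = q') : P Γ q' := e ▸ h

theorem shift_aux {A B C Z : Obj} (f : A.prod (B.prod C) ⟶ Z) :
    qc _ _ ≫ qbl B C A ≫ qbr _ _ _ ≫ qc _ _ ≫ f = f := by
  rw [← Category.assoc (qbl _ _ _), qbl_qbr, Category.id_comp, ← Category.assoc, qc_qc,
    Category.id_comp]

theorem shift_nat {A A' C D Y Z : Obj} (i : A ⟶ A') (q : A'.prod C ⟶ Y) (k : D.prod Y ⟶ Z) :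
    qbr A C D ≫ qc (A.prod C) D ≫ qpr (𝟙 D) (qpr i (𝟙 C) ≫ q) ≫ k =
      qpr i (𝟙 (C.prod D)) ≫ qbr A' C D ≫ qc (A'.prod C) D ≫ qpr (𝟙 D) q ≫ k := by
  have e : qpr (𝟙 D) (qpr i (𝟙 C) ≫ q) = qpr (𝟙 D) (qpr i (𝟙 C)) ≫ qpr (𝟙 D) q := by
    rw [qpr_comp, Category.comp_id]
  rw [e, ← qpr_id, ← Category.assoc (qpr i _), ← qbr_nat, Category.assoc (qbr _ _ _),
    ← Category.assoc (qpr _ _) (qc _ _), ← qc_nat]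
  simp only [Category.assoc]

theorem Closed.post {X Y : Obj} {P : ∀ Γ : Fml, (tF Γ ⟶ X) → Prop} (hP : Closed P) (f : Y ⟶ X) :
    Closed (fun Γ (q : tF Γ ⟶ Y) => P Γ (q ≫ f)) where
  str hs h := pcast (hP.str hs h) (Category.assoc _ _ _).symm
  exf q := hP.exf _
  orE q h₁ h₂ := hP.orE _ (pcast h₁ (Category.assoc _ _ _)) (pcast h₂ (Category.assoc _ _ _))
  tri a q ha h := pcast (hP.tri a _ ha h) (Category.assoc _ _ _).symm

section
variable {X : Obj} {P : ∀ Γ : Fml, (tF Γ ⟶ X) → Prop}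

theorem Closed.c (hP : Closed P) {A B : Fml} {q : (tF A).prod (tF B) ⟶ X} (h : P (A.and B) q) :
    P (B.and A) (qc _ _ ≫ q) := hP.str (Str.perm .box rfl A B) h
theorem Closed.br (hP : Closed P) {A B C : Fml} {q : ((tF A).prod (tF B)).prod (tF C) ⟶ X}
    (h : P ((A.and B).and C) q) : P (A.and (B.and C)) (qbr _ _ _ ≫ q) :=
  hP.str (Str.bA .box rfl A B C) h
theorem Closed.bl (hP : Closed P) {A B C : Fml} {q : (tF A).prod ((tF B).prod (tF C)) ⟶ X}
    (h : P (A.and (B.and C)) q) : P ((A.and B).and C) (qbl _ _ _ ≫ q) :=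
  hP.str (Str.bB .box rfl A B C) h
theorem Closed.w (hP : Closed P) {A : Fml} {q : (tF A).prod (tF A) ⟶ X} (h : P (A.and A) q) :
    P A (qw _ ≫ q) := hP.str (Str.contr .box rfl A) h
theorem Closed.d (hP : Closed P) {A : Fml} {q : tF A ⟶ X} (h : P A q) : P (A.and .top) (qd _ ≫ q) :=
  hP.str (Str.unitI .box rfl A) h
theorem Closed.di (hP : Closed P) {A : Fml} {q : (tF A).prod .unit ⟶ X} (h : P (A.and .top) q) :
    P A (qdi _ ≫ q) := hP.str (Str.unitE .box rfl A) h
theorem Closed.fst (hP : Closed P) {A : Fml} (B : Fml) {q : tF A ⟶ X} (h : P A q) :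
    P (A.and B) (qfst _ _ ≫ q) := by
  exact pcast (hP.str (Str.thin (.conR A .box) rfl B) (hP.d h)) (Category.assoc _ _ _).symm
theorem Closed.snd (hP : Closed P) {A : Fml} (B : Fml) {q : tF A ⟶ X} (h : P A q) :
    P (B.and A) (qsnd _ _ ≫ q) := by
  exact pcast (hP.c (hP.fst B h)) (Category.assoc _ _ _).symm

theorem Closed.shift (hP : Closed P) {Y : Obj} (Δ : Fml) (k : (tF Δ).prod Y ⟶ X) :
    Closed (fun Γ (q : tF Γ ⟶ Y) => P (Δ.and Γ) (qpr (𝟙 (tF Δ)) q ≫ k)) where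
  str {Γ Γ' s q} hs h := by
    have e : qpr (𝟙 (tF Δ)) s ≫ qpr (𝟙 (tF Δ)) q ≫ k = qpr (𝟙 (tF Δ)) (s ≫ q) ≫ k := by
      rw [qpr_comp_assoc, Category.comp_id]
    exact pcast (hP.str (hs.right Δ) h) e
  exf q := pcast (hP.snd Δ (hP.exf (cl (.exf X)))) (qzero_uniq _ _)
  orE {A B C} q h₁ h₂ := by
    have h₁' := pcast (hP.br (hP.c h₁)) (shift_nat _ _ _)
    have h₂' := pcast (hP.br (hP.c h₂)) (shift_nat _ _ _)
    exact pcast (hP.c (hP.bl (hP.orE (A := A) (B := B) (C := C.and Δ) _ h₁' h₂'))) (shift_aux _)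
  tri {A B C D} a q ha h := by
    have h' := hP.c (hP.bl (hP.tri (D := D.and Δ) a _ ha (hP.br (hP.c h))))
    refine pcast h' ?_
    refine Eq.trans ?_ (shift_aux _)
    refine congrArg (fun x => qc _ _ ≫ qbl _ _ _ ≫ x) ?_
    exact (shift_nat _ _ _).symm

end

theorem Nf.closed (A : Fml) : Closed (fun Γ q => Nf Γ A q) where
  str hs h := by
    obtain ⟨π, hπ, rfl⟩ := h
    cases hs with
    | bA F hF A B C => exact ⟨.bA F hF π, hπ, rfl⟩
    | bB F hF A B C => exact ⟨.bB F hF π, hπ, rfl⟩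
    | perm F hF A B => exact ⟨.perm F hF π, hπ, rfl⟩
    | contr F hF A => exact ⟨.contr F hF π, hπ, rfl⟩
    | thin F hF A => exact ⟨.thin F hF A π, hπ, rfl⟩
    | unitI F hF A => exact ⟨.unitI F hF π, hπ, rfl⟩
    | unitE F hF A => exact ⟨.unitE F hF π, hπ, rfl⟩
  exf q := ⟨.exf A, trivial, qexf_uniq _ _⟩
  orE {A' B' C'} q h₁ h₂ := by
    obtain ⟨π₁, hπ₁, e₁⟩ := h₁
    obtain ⟨π₂, hπ₂, e₂⟩ := h₂
    refine ⟨.orE π₁ π₂, ⟨hπ₁, hπ₂⟩, ?_⟩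
    exact orE_aux _ _ q e₁ e₂
  tri a q ha h := by
    obtain ⟨π₁, hπ₁, rfl⟩ := ha
    obtain ⟨π₂, hπ₂, rfl⟩ := h
    exact ⟨.tri π₁ π₂, ⟨hπ₁, hπ₂⟩, rfl⟩

/-- the logical predicate -/
def Red : (X : Obj) → (Γ : Fml) → (tF Γ ⟶ X) → Prop
  | .pl i, Γ, q => Nf Γ (.pl i) q
  | .unit, _, _ => True
  | .zero, Γ, q => Gen (fun _ _ => False) Γ q
  | .prod A B, Γ, q => Red A Γ (q ≫ qfst A B) ∧ Red B Γ (q ≫ qsnd A B)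
  | .coprod A B, Γ, q => Gen (fun Γ q => (∃ a, Red A Γ a ∧ q = a ≫ qinl A B) ∨
      (∃ b, Red B Γ b ∧ q = b ≫ qinr A B)) Γ q
  | .exp A B, Γ, q => ∀ (Δ : Fml) (a : tF Δ ⟶ A), Red A Δ a →
      Red B (Δ.and Γ) (qpr a q ≫ qev A B)

theorem Red.closed (X : Obj) : Closed (Red X) := by
  induction X with
  | pl i => exact Nf.closed (.pl i)
  | unit => exact ⟨fun _ _ => trivial, fun _ => trivial, fun _ _ _ => trivial,
      fun _ _ _ _ => trivial⟩
  | zero => exact Gen.closed _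
  | prod A B ihA ihB =>
    have hA := ihA.post (qfst A B)
    have hB := ihB.post (qsnd A B)
    exact ⟨fun hs h => ⟨hA.str hs h.1, hB.str hs h.2⟩, fun q => ⟨hA.exf q, hB.exf q⟩,
      fun q h₁ h₂ => ⟨hA.orE q h₁.1 h₂.1, hB.orE q h₁.2 h₂.2⟩,
      fun a q ha h => ⟨hA.tri a q ha h.1, hB.tri a q ha h.2⟩⟩
  | coprod A B _ _ => exact Gen.closed _
  | exp A B _ ihB =>
    have key : ∀ (Γ : Fml) (q : tF Γ ⟶ A.exp B), Red (.exp A B) Γ q ↔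
        ∀ (Δ : Fml) (a : tF Δ ⟶ A), Red A Δ a →
          Red B (Δ.and Γ) (qpr (𝟙 (tF Δ)) q ≫ qpr a (𝟙 _) ≫ qev A B) := fun Γ q =>
      ⟨fun h Δ a ha => pcast (h Δ a ha) (qpr_split _ _ _),
        fun h Δ a ha => pcast (P := Red B) (h Δ a ha) (qpr_split _ _ _).symm⟩
    have hB := fun (Δ : Fml) (a : tF Δ ⟶ A) => ihB.shift Δ (qpr a (𝟙 _) ≫ qev A B)
    constructor
    · intro Γ Δ s q hs h
      exact (key _ _).2 fun Δ a ha => (hB Δ a).str hs ((key _ _).1 h Δ a ha)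
    · intro q
      exact (key _ _).2 fun Δ a ha => (hB Δ a).exf q
    · intro A' B' C' q h₁ h₂
      exact (key _ _).2 fun Δ a ha =>
        (hB Δ a).orE q ((key _ _).1 h₁ Δ a ha) ((key _ _).1 h₂ Δ a ha)
    · intro A' B' C' D' a' q ha' h
      exact (key _ _).2 fun Δ a ha => (hB Δ a).tri a' q ha' ((key _ _).1 h Δ a ha)

theorem reify_reflect (A : Fml) :
    (∀ Γ q, Red (tF A) Γ q → Nf Γ A q) ∧ Red (tF A) A (𝟙 (tF A)) := by
  induction A with
  | pl i => exact ⟨fun _ _ h => h, ⟨.ax _, trivial, rfl⟩⟩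
  | top => exact ⟨fun Γ q _ => ⟨.thin .box rfl Γ (.ax .top), trivial, qk_uniq _ _⟩, trivial⟩
  | bot => exact ⟨fun Γ q h => Gen.elim (Nf.closed .bot) (fun _ _ h => h.elim) h, Gen.exf _⟩
  | and A B ihA ihB =>
    constructor
    · intro Γ q h
      obtain ⟨π₁, h₁, e₁⟩ := ihA.1 _ _ h.1
      obtain ⟨π₂, h₂, e₂⟩ := ihB.1 _ _ h.2
      refine ⟨.contr .box rfl (.andI π₁ π₂), ⟨h₁, h₂⟩, ?_⟩
      have e : qw (tF Γ) ≫ qpr (cl (tP π₁)) (cl (tP π₂)) = q := by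
        rw [e₁, e₂]
        exact qpair_eta _
      exact e
    · have h₁ := (Red.closed (tF A)).fst B ihA.2
      have h₂ := (Red.closed (tF B)).snd A ihB.2
      exact ⟨pcast h₁ ((Category.comp_id _).trans (Category.id_comp _).symm),
        pcast h₂ ((Category.comp_id _).trans (Category.id_comp _).symm)⟩
  | or A B ihA ihB =>
    constructor
    · intro Γ q h
      refine Gen.elim (Nf.closed (A.or B)) ?_ h
      rintro Γ q (⟨a, ha, rfl⟩ | ⟨b, hb, rfl⟩)
      · obtain ⟨π, hπ, rfl⟩ := ihA.1 _ _ ha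
        exact ⟨.orI1 B π, hπ, rfl⟩
      · obtain ⟨π, hπ, rfl⟩ := ihB.1 _ _ hb
        exact ⟨.orI2 A π, hπ, rfl⟩
    · have hc := Red.closed ((tF A).coprod (tF B))
      have ha : Red ((tF A).coprod (tF B)) A (𝟙 _ ≫ qinl (tF A) (tF B)) :=
        Gen.base (Or.inl ⟨_, ihA.2, rfl⟩)
      have hb : Red ((tF A).coprod (tF B)) B (𝟙 _ ≫ qinr (tF A) (tF B)) :=
        Gen.base (Or.inr ⟨_, ihB.2, rfl⟩)
      have := hc.di (A := A.or B) (hc.orE (A := A) (B := B) (C := .top) (qd _)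
        (pcast (hc.d ha) (qd_id_nat _)) (pcast (hc.d hb) (qd_id_nat _)))
      have e : qdi (tF (A.or B)) ≫ qd (tF (A.or B)) = 𝟙 _ := qdi_qd _
      rw [← e]
      exact this
  | imp A B ihA ihB =>
    constructor
    · intro Γ q h
      obtain ⟨π, hπ, e⟩ := ihB.1 _ _ (h A _ ihA.2)
      refine ⟨.star π, hπ, ?_⟩
      exact (congrArg (fun x => qcur (A := tF A) (B := tF Γ) x) e).trans (qcur_eta q)
    · intro Δ a ha
      have hc := Red.closed (tF B)
      have := hc.di (A := Δ.and (A.imp B)) (hc.tri (C := B) (D := .top) a (qd _) (ihA.1 _ _ ha)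
        (pcast (hc.d ihB.2) (Category.comp_id _)))
      exact pcast this (qdi_d_nat _)

theorem fundamental {X Y : Obj} (g : Mor X Y) :
    ∀ (Γ : Fml) (q : tF Γ ⟶ X), Red X Γ q → Red Y Γ (q ≫ cl g) := by
  induction g with
  | id A => intro Γ q h; rw [cl_id, Category.comp_id]; exact h
  | comp f g ihf ihg => intro Γ q h; rw [cl_comp, ← Category.assoc]; exact ihg _ _ (ihf _ _ h)
  | d A => intro Γ q h; change Red A Γ (q ≫ qd A); rw [qd_fst]; exact h.1
  | dInv A =>
    intro Γ q h
    refine ⟨?_, trivial⟩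
    change Red A Γ ((q ≫ qdi A) ≫ _)
    rw [Category.assoc, qdi_fst, Category.comp_id]; exact h
  | assocR A B C =>
    intro Γ q h
    obtain ⟨h₁, h₂, h₃⟩ := h
    change Red _ Γ (q ≫ qbr A B C)
    simp only [Category.assoc] at h₂ h₃
    refine ⟨⟨?_, ?_⟩, ?_⟩ <;>
      simp only [Category.assoc, qbr_fst_fst, qbr_fst_snd, qbr_snd] <;> assumption
  | assocL A B C =>
    intro Γ q h
    obtain ⟨⟨h₁, h₂⟩, h₃⟩ := h
    change Red _ Γ (q ≫ qbl A B C)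
    simp only [Category.assoc] at h₁ h₂
    refine ⟨?_, ?_, ?_⟩ <;>
      simp only [Category.assoc, qbl_fst, qbl_snd_fst, qbl_snd_snd] <;> assumption
  | braid A B =>
    intro Γ q h
    obtain ⟨h₁, h₂⟩ := h
    change Red _ Γ (q ≫ qc A B)
    refine ⟨?_, ?_⟩ <;> simp only [Category.assoc, qc_fst, qc_snd] <;> assumption
  | diag A =>
    intro Γ q h
    change Red _ Γ (q ≫ qw A)
    refine ⟨?_, ?_⟩ <;> simpa only [Category.assoc, qw_fst, qw_snd, Category.comp_id] using h
  | bang A => intro Γ q h; trivial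
  | codiag A =>
    intro Γ q h
    refine Gen.elim ((Red.closed A).post (qm A)) ?_ h
    rintro Γ q (⟨a, ha, rfl⟩ | ⟨a, ha, rfl⟩)
    · simpa only [Category.assoc, qinl_m, Category.comp_id] using ha
    · simpa only [Category.assoc, qinr_m, Category.comp_id] using ha
  | exf A =>
    intro Γ q h
    exact Gen.elim ((Red.closed A).post (cl (.exf A))) (fun _ _ h => h.elim) h
  | inl A B => intro Γ q h; exact Gen.base (Or.inl ⟨q, h, rfl⟩)
  | inr A B => intro Γ q h; exact Gen.base (Or.inr ⟨q, h, rfl⟩)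
  | ev A B =>
    intro Γ q h
    exact pcast ((Red.closed B).w (h.2 _ _ h.1)) (ev_aux _ _)
  | coev A B =>
    intro Γ q h Δ a ha
    have h' : Red (A.prod B) (Δ.and Γ) (qpr a q) :=
      ⟨pcast ((Red.closed A).fst Γ ha) (qpr_fst _ _).symm,
        pcast ((Red.closed B).snd Δ h) (qpr_snd _ _).symm⟩
    exact pcast h' (coev_aux a q).symm
  | pr f g ihf ihg =>
    intro Γ q h
    have h₁ := ihf _ _ h.1
    have h₂ := ihg _ _ h.2
    rw [Category.assoc] at h₁ h₂
    rw [cl_pr]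
    refine ⟨?_, ?_⟩
    · rw [Category.assoc, qpr_fst]; exact h₁
    · rw [Category.assoc, qpr_snd]; exact h₂
  | co f g ihf ihg =>
    intro Γ q h
    refine Gen.elim ((Red.closed _).post (cl (.co f g))) ?_ h
    rintro Γ q (⟨a, ha, rfl⟩ | ⟨a, ha, rfl⟩)
    · rw [cl_co, Category.assoc, qinl_co, ← Category.assoc]
      exact Gen.base (Or.inl ⟨_, ihf _ _ ha, rfl⟩)
    · rw [cl_co, Category.assoc, qinr_co, ← Category.assoc]
      exact Gen.base (Or.inr ⟨_, ihg _ _ ha, rfl⟩)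
  | @ex A B C D f g ihf ihg =>
    intro Γ q h Δ a ha
    exact pcast (ihg _ _ (h Δ _ (ihf _ _ ha))) (ex_aux _ _ _ _)

theorem exists_mixless_aux (A B : Fml) (g : Mor (tF A) (tF B)) :
    ∃ π : JPf A B, MixFree π ∧ BEq g (tP π) := by
  have h := fundamental g A _ (reify_reflect A).2
  rw [Category.id_comp] at h
  obtain ⟨π, hπ, e⟩ := (reify_reflect B).1 _ _ h
  exact ⟨π, hπ, BEq_of_cls e.symm⟩

theorem exists_mixless_cast {A B : Fml} {X Y : Obj} (hX : tF A = X) (hY : tF B = Y) (g : Mor X Y)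
    (hM : Mor (tF A) (tF B) = Mor X Y) :
    ∃ π : JPf A B, MixFree π ∧ BEq g (cast hM (tP π)) := by
  subst hX hY
  exact exists_mixless_aux A B g

/-- Lemma 5.16 of the paper.  For every morphism term `g` of the
free bicartesian closed category `ℬ` there exists a mixless proof `π` of the sequent
system `𝒥` such that `g = t(π)` holds in `ℬ`. -/
theorem exists_mixless_repr (X Y : Obj) (g : Mor X Y) :
    ∃ π : JPf (uF X) (uF Y), MixFree π ∧
      BEq g (cast (by rw [tF_uF, tF_uF]) (tP π) : Mor X Y) := by
  exact exists_mixless_cast (tF_uF X) (tF_uF Y) g _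
end JSys
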